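/- For any two distinct vertices x and y of the d-dimensional discrete torus (ℤ/nℤ)^d with d ≥ 1 and n ≥ 1, the probability that a simple symmetric random walk started at x hits y strictly before returning to x is at least 1/(2d·dist(x,y)), where dist is the graph distance on the torus. -/

import Mathlib

open scoped BigOperators

/-- One step of the simple random walk on the torus `(ℤ/nℤ)^d`: move by `±1`
in coordinate `m.1`, with sign given by `m.2`. -/
def torusMove (d n : ℕ) (x : Fin d → ZMod n) (m : Fin d × Bool) : Fin d → ZMod n :=
  Function.update x m.1 (x m.1 + if m.2 then 1 else -1)

/-- Position after performing the list of moves `l` starting from `x`. -/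
def posAfter (d n : ℕ) (x : Fin d → ZMod n) (l : List (Fin d × Bool)) : Fin d → ZMod n :=
  l.foldl (torusMove d n) x

/-- Graph distance on the torus `(ℤ/nℤ)^d`. -/
noncomputable def tdist (d n : ℕ) (x y : Fin d → ZMod n) : ℕ :=
  sInf {L : ℕ | ∃ l : List (Fin d × Bool), l.length = L ∧ posAfter d n x l = y}

/-! Give every edge of the torus unit conductance. The probability `h z` that the walk from `z` hits
`y` before `x` is the potential with `h x = 0` and `h y = 1` that is harmonic elsewhere, and `2d`
times the probability in question is the current `∑ h` over the edges at `x`. Summation by parts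
identifies this current with the Dirichlet energy of `h`, while Cauchy–Schwarz along a geodesic from
`x` to `y` bounds the energy from below by `1 / dist(x, y)`. -/

open Finset

section Network

variable {V : Type*} [Fintype V] {c : V → V → ℝ}

/-- The Laplacian of the network with conductances `c`: the net current flowing out of `u` when the
potential is `f`. -/
def networkLaplacian (c : V → V → ℝ) (f : V → ℝ) (u : V) : ℝ :=
  ∑ v, c u v * (f u - f v)

/-- The Dirichlet energy of the potential `f` on the network with conductances `c`; the factor `1/2`
makes every unordered pair of vertices count once. -/
noncomputable def dirichletEnergy (c : V → V → ℝ) (f : V → ℝ) : ℝ :=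
  (∑ u, ∑ v, c u v * (f u - f v) ^ 2) / 2

lemma sum_mul_networkLaplacian (hc : ∀ u v, c u v = c v u) (f g : V → ℝ) :
    ∑ u, g u * networkLaplacian c f u =
      (∑ u, ∑ v, c u v * ((g u - g v) * (f u - f v))) / 2 := by
  have hswap : ∑ u, ∑ v, g v * (c u v * (f u - f v)) =
      -∑ u, ∑ v, g u * (c u v * (f u - f v)) := by
    rw [sum_comm]
    simp only [← sum_neg_distrib]
    refine sum_congr rfl fun u _ => sum_congr rfl fun v _ => ?_
    rw [hc]
    ring
  have hsplit : ∑ u, ∑ v, c u v * ((g u - g v) * (f u - f v)) =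
      ∑ u, ∑ v, g u * (c u v * (f u - f v)) - ∑ u, ∑ v, g v * (c u v * (f u - f v)) := by
    simp only [← sum_sub_distrib]
    exact sum_congr rfl fun u _ => sum_congr rfl fun v _ => by ring
  simp only [networkLaplacian, mul_sum]
  rw [hsplit, hswap]
  ring

lemma dirichletEnergy_eq_sum_mul_of_harmonic (hc : ∀ u v, c u v = c v u) {h : V → ℝ} {x y : V}
    (hx : h x = 0) (hy : h y = 1) (hharm : ∀ z, z ≠ x → z ≠ y → networkLaplacian c h z = 0) :
    dirichletEnergy c h = ∑ v, c x v * h v := by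
  calc dirichletEnergy c h
      = ∑ u, (h u - 1) * networkLaplacian c h u := by
        rw [sum_mul_networkLaplacian hc, dirichletEnergy]
        simp only [sub_sub_sub_cancel_right, sq]
    _ = (h x - 1) * networkLaplacian c h x := by
        refine Fintype.sum_eq_single x fun z hzx => ?_
        rcases eq_or_ne z y with rfl | hzy
        · rw [hy, sub_self, zero_mul]
        · rw [hharm z hzx hzy, mul_zero]
    _ = ∑ v, c x v * h v := by simp [networkLaplacian, hx]

lemma sum_path_le_dirichletEnergy (hc : ∀ u v, c u v = c v u) (hc0 : ∀ u v, 0 ≤ c u v)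
    {p : ℕ → V} {L : ℕ} (hp : Set.InjOn p (Set.Iic L)) (f : V → ℝ) :
    ∑ i ∈ range L, c (p i) (p (i + 1)) * (f (p i) - f (p (i + 1))) ^ 2 ≤ dirichletEnergy c f := by
  classical
  let D : V × V → ℝ := fun e => c e.1 e.2 * (f e.1 - f e.2) ^ 2
  let A : Finset (V × V) := (range L).image fun i => (p i, p (i + 1))
  have hA : ∑ e ∈ A, D e = ∑ i ∈ range L, D (p i, p (i + 1)) := by
    refine sum_image fun i hi j hj hij => hp ?_ ?_ (Prod.mk.inj hij).1
    · exact (mem_range.1 hi).le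
    · exact (mem_range.1 hj).le
  have hswap : ∑ e ∈ A.image Prod.swap, D e = ∑ e ∈ A, D e := by
    rw [sum_image Prod.swap_injective.injOn]
    refine sum_congr rfl fun e _ => ?_
    simp only [D, Prod.fst_swap, Prod.snd_swap]
    rw [hc, sub_sq_comm]
  have hdisj : Disjoint A (A.image Prod.swap) := by
    rw [disjoint_left]
    intro e he he'
    simp only [A, mem_image, mem_range, exists_exists_and_eq_and] at he he'
    obtain ⟨i, hi, rfl⟩ := he
    obtain ⟨j, hj, hij⟩ := he'
    have h₁ : j + 1 = i := hp hj hi.le (Prod.mk.inj hij).1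
    have h₂ : j = i + 1 := hp hj.le hi (Prod.mk.inj hij).2
    omega
  have htotal : ∑ e ∈ A, D e + ∑ e ∈ A, D e ≤ ∑ e, D e := by
    nth_rw 2 [← hswap]
    rw [← sum_union hdisj]
    exact sum_le_univ_sum_of_nonneg fun e => mul_nonneg (hc0 _ _) (sq_nonneg _)
  rw [hA, Fintype.sum_prod_type] at htotal
  simp only [D] at htotal
  rw [dirichletEnergy]
  linarith

lemma sq_sub_le_length_mul_dirichletEnergy (hc : ∀ u v, c u v = c v u) (hc0 : ∀ u v, 0 ≤ c u v)
    {p : ℕ → V} {L : ℕ} (hp : Set.InjOn p (Set.Iic L)) (hpc : ∀ i < L, 1 ≤ c (p i) (p (i + 1)))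
    (f : V → ℝ) : (f (p 0) - f (p L)) ^ 2 ≤ L * dirichletEnergy c f := by
  calc (f (p 0) - f (p L)) ^ 2
      = (∑ i ∈ range L, (f (p i) - f (p (i + 1)))) ^ 2 := by
        rw [sum_range_sub' fun i => f (p i)]
    _ ≤ L * ∑ i ∈ range L, (f (p i) - f (p (i + 1))) ^ 2 := by
        simpa only [card_range] using
          sq_sum_le_card_mul_sum_sq (s := range L) (f := fun i => f (p i) - f (p (i + 1)))
    _ ≤ L * ∑ i ∈ range L, c (p i) (p (i + 1)) * (f (p i) - f (p (i + 1))) ^ 2 := by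
        gcongr with i hi
        exact le_mul_of_one_le_left (sq_nonneg _) (hpc i (mem_range.1 hi))
    _ ≤ L * dirichletEnergy c f := by
        gcongr
        exact sum_path_le_dirichletEnergy hc hc0 hp f

lemma one_le_length_mul_sum_of_harmonic (hc : ∀ u v, c u v = c v u) (hc0 : ∀ u v, 0 ≤ c u v)
    {p : ℕ → V} {L : ℕ} (hp : Set.InjOn p (Set.Iic L)) (hpc : ∀ i < L, 1 ≤ c (p i) (p (i + 1)))
    {h : V → ℝ} (h0 : h (p 0) = 0) (hL : h (p L) = 1)
    (hharm : ∀ z, z ≠ p 0 → z ≠ p L → networkLaplacian c h z = 0) :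
    1 ≤ L * ∑ v, c (p 0) v * h v := by
  have hle := sq_sub_le_length_mul_dirichletEnergy hc hc0 hp hpc h
  rw [dirichletEnergy_eq_sum_mul_of_harmonic hc h0 hL hharm, h0, hL] at hle
  norm_num at hle
  exact hle

end Network

section Word

variable {M : Type*} [Fintype M]

/-- The probability that a uniformly random word of length `t` over `M` satisfies `Q`. -/
noncomputable def wordProb (t : ℕ) (Q : List M → Prop) [DecidablePred Q] : ℝ :=
  ∑ ω : Fin t → M, if Q (List.ofFn ω) then ((Fintype.card M : ℝ)⁻¹) ^ t else 0

lemma wordProb_nonneg (t : ℕ) (Q : List M → Prop) [DecidablePred Q] : 0 ≤ wordProb t Q :=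
  sum_nonneg fun ω _ => by positivity

lemma wordProb_zero (Q : List M → Prop) [DecidablePred Q] :
    wordProb 0 Q = if Q [] then 1 else 0 := by
  simp [wordProb]

lemma wordProb_succ (t : ℕ) (Q : List M → Prop) [DecidablePred Q] :
    wordProb (t + 1) Q =
      (Fintype.card M : ℝ)⁻¹ * ∑ m, wordProb t fun l => Q (m :: l) := by
  simp only [wordProb, mul_sum, mul_ite, mul_zero, ← pow_succ']
  rw [← (Fin.consEquiv fun _ : Fin (t + 1) => M).sum_comp, Fintype.sum_prod_type]
  simp only [Fin.consEquiv, Equiv.coe_fn_mk, List.ofFn_cons]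

end Word

section Walk

variable {V M : Type*}

/-- The least number of steps leading from `x` to `y`, where `step u m` is the endpoint of the edge
with label `m` out of `u`; it is `0` when `y` cannot be reached from `x`. -/
noncomputable def stepDist (step : V → M → V) (x y : V) : ℕ :=
  sInf {L : ℕ | ∃ l : List M, l.length = L ∧ l.foldl step x = y}

lemma stepDist_le_length {step : V → M → V} {x y : V} {l : List M} (hl : l.foldl step x = y) :
    stepDist step x y ≤ l.length :=
  Nat.sInf_le ⟨l, rfl, hl⟩

lemma exists_length_eq_stepDist {step : V → M → V} {x y : V}
    (hreach : ∃ l : List M, l.foldl step x = y) :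
    ∃ l : List M, l.length = stepDist step x y ∧ l.foldl step x = y :=
  Nat.sInf_mem (hreach.elim fun l hl => ⟨l.length, l, rfl, hl⟩ :
    {L : ℕ | ∃ l : List M, l.length = L ∧ l.foldl step x = y}.Nonempty)

lemma injOn_foldl_take_of_length_eq_stepDist {step : V → M → V} {x y : V} {l : List M}
    (hlen : l.length = stepDist step x y) (hl : l.foldl step x = y) :
    Set.InjOn (fun i => (l.take i).foldl step x) (Set.Iic l.length) := by
  have hle : ∀ i j, j ≤ l.length →
      (l.take i).foldl step x = (l.take j).foldl step x → j ≤ i := by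
    intro i j hj hij
    -- Cutting the loop between times `i` and `j` out of `l` leaves a word from `x` to `y`.
    have hcut : (l.take i ++ l.drop j).foldl step x = y := by
      rw [List.foldl_append, hij, ← List.foldl_append, List.take_append_drop, hl]
    have hshort := stepDist_le_length hcut
    rw [← hlen, List.length_append, List.length_take, List.length_drop] at hshort
    omega
  exact fun i hi j hj hij => le_antisymm (hle j i hi hij.symm) (hle i j hj hij)

/-- The walk that starts at `z` and follows the word `l` visits `{x, y}` for the first time at the
end of `l`, and does so at `y`; time `0` counts as a visit. -/
def FirstHits (step : V → M → V) (x y z : V) (l : List M) : Prop :=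
  (∀ s < l.length, (l.take s).foldl step z ≠ x ∧ (l.take s).foldl step z ≠ y) ∧
    l.foldl step z = y

lemma firstHits_cons {step : V → M → V} {x y z : V} {m : M} {l : List M} :
    FirstHits step x y z (m :: l) ↔ (z ≠ x ∧ z ≠ y) ∧ FirstHits step x y (step z m) l := by
  rw [FirstHits, List.length_cons, Nat.forall_lt_succ_left]
  simp only [List.take_zero, List.take_succ_cons, List.foldl_nil, List.foldl_cons, FirstHits,
    and_assoc]

lemma firstHits_step_ofFn_iff {step : V → M → V} {x y z : V} {m : M} {t : ℕ} {ω : Fin t → M} :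
    FirstHits step x y (step z m) (List.ofFn ω) ↔
      (∀ s : Fin (t + 1), 1 ≤ (s : ℕ) → (s : ℕ) ≤ t →
        ((m :: List.ofFn ω).take s).foldl step z ≠ x ∧
        ((m :: List.ofFn ω).take s).foldl step z ≠ y) ∧
      (m :: List.ofFn ω).foldl step z = y := by
  rw [Fin.forall_fin_succ]
  simp [FirstHits, Fin.forall_iff]

variable [Fintype M] [DecidableEq V]

instance (step : V → M → V) (x y z : V) : DecidablePred (FirstHits step x y z) :=
  fun _ => inferInstanceAs (Decidable (_ ∧ _))

/-- The number of edges from `u` to `v`, loops and multiple edges being allowed. -/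
def stepCount (step : V → M → V) (u v : V) : ℕ :=
  #{m | step u m = v}

lemma one_le_stepCount_foldl_take (step : V → M → V) (x : V) (l : List M) {i : ℕ}
    (hi : i < l.length) :
    1 ≤ stepCount step ((l.take i).foldl step x) ((l.take (i + 1)).foldl step x) := by
  refine card_pos.2 ⟨l[i], mem_filter_univ _ |>.2 ?_⟩
  rw [List.take_succ_eq_append_getElem hi, List.foldl_append, List.foldl_cons, List.foldl_nil]

lemma sum_step_eq_sum_stepCount_mul [Fintype V] (step : V → M → V) (u : V) (F : V → ℝ) :
    ∑ m, F (step u m) = ∑ v, stepCount step u v * F v := by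
  simp only [stepCount, ← nsmul_eq_mul]
  rw [← sum_fiberwise' univ (step u) F]
  simp only [sum_const]

variable (step : V → M → V) {x y z : V}

lemma wordProb_firstHits_succ (hzx : z ≠ x) (hzy : z ≠ y) (t : ℕ) :
    wordProb (t + 1) (FirstHits step x y z) =
      (Fintype.card M : ℝ)⁻¹ * ∑ m, wordProb t (FirstHits step x y (step z m)) := by
  rw [wordProb_succ]
  simp only [firstHits_cons, ne_eq, hzx, hzy, not_false_eq_true, and_self, true_and]

lemma wordProb_firstHits_succ_of_mem (hz : z = x ∨ z = y) (t : ℕ) :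
    wordProb (t + 1) (FirstHits step x y z) = 0 := by
  have hz' : ¬(z ≠ x ∧ z ≠ y) := by tauto
  rw [wordProb_succ]
  simp only [firstHits_cons, hz', false_and, wordProb, if_false, sum_const_zero, mul_zero]

lemma wordProb_firstHits_zero :
    wordProb 0 (FirstHits step x y z) = if z = y then 1 else 0 := by
  simp [wordProb_zero, FirstHits]

lemma sum_range_wordProb_firstHits_le_one (x y z : V) (T : ℕ) :
    ∑ t ∈ range T, wordProb t (FirstHits step x y z) ≤ 1 := by
  induction T generalizing z with
  | zero => simp
  | succ T ih =>
    rw [sum_range_succ', wordProb_firstHits_zero]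
    by_cases hz : z = x ∨ z = y
    · simp only [wordProb_firstHits_succ_of_mem step hz, sum_const_zero, zero_add]
      split_ifs <;> norm_num
    · obtain ⟨hzx, hzy⟩ := not_or.1 hz
      simp only [wordProb_firstHits_succ step hzx hzy, if_neg hzy, add_zero]
      rw [← mul_sum, sum_comm]
      calc (Fintype.card M : ℝ)⁻¹ *
            ∑ m, ∑ t ∈ range T, wordProb t (FirstHits step x y (step z m))
          ≤ (Fintype.card M : ℝ)⁻¹ * ∑ _m : M, 1 := by
            gcongr with m
            exact ih (step z m)
        _ ≤ 1 := by simpa using inv_mul_le_one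

lemma summable_wordProb_firstHits (x y z : V) :
    Summable fun t => wordProb t (FirstHits step x y z) :=
  summable_of_sum_range_le (fun t => wordProb_nonneg t _)
    (sum_range_wordProb_firstHits_le_one step x y z)

/-- The probability that the walk from `z` ever visits `y`, without visiting `x` before; time `0`
counts as a visit. -/
noncomputable def hitProb (x y z : V) : ℝ :=
  ∑' t, wordProb t (FirstHits step x y z)

lemma hitProb_of_mem (hz : z = x ∨ z = y) : hitProb step x y z = if z = y then 1 else 0 := by
  rw [hitProb, (summable_wordProb_firstHits step x y z).tsum_eq_zero_add, wordProb_firstHits_zero]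
  simp only [wordProb_firstHits_succ_of_mem step hz, tsum_zero, add_zero]

lemma tsum_inv_card_mul_sum_wordProb (x y z : V) :
    ∑' t, (Fintype.card M : ℝ)⁻¹ * ∑ m, wordProb t (FirstHits step x y (step z m)) =
      (Fintype.card M : ℝ)⁻¹ * ∑ m, hitProb step x y (step z m) := by
  rw [tsum_mul_left,
    Summable.tsum_finsetSum fun m _ => summable_wordProb_firstHits step x y (step z m)]
  rfl

lemma hitProb_eq_average (hzx : z ≠ x) (hzy : z ≠ y) :
    hitProb step x y z = (Fintype.card M : ℝ)⁻¹ * ∑ m, hitProb step x y (step z m) := by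
  rw [hitProb, (summable_wordProb_firstHits step x y z).tsum_eq_zero_add, wordProb_firstHits_zero,
    if_neg hzy, zero_add, ← tsum_inv_card_mul_sum_wordProb]
  simp only [wordProb_firstHits_succ step hzx hzy]

lemma networkLaplacian_hitProb [Fintype V] [Nonempty M] (hzx : z ≠ x) (hzy : z ≠ y) :
    networkLaplacian (fun u v => (stepCount step u v : ℝ)) (hitProb step x y) z = 0 := by
  rw [networkLaplacian,
    ← sum_step_eq_sum_stepCount_mul step z fun v => hitProb step x y z - hitProb step x y v,
    sum_sub_distrib, sum_const, card_univ, nsmul_eq_mul, hitProb_eq_average step hzx hzy,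
    mul_inv_cancel_left₀ (Nat.cast_ne_zero.2 Fintype.card_ne_zero), sub_self]

/-- The probability that the walk from `x` visits `y` before its first return to `x`, as a sum over
the time `t + 1` of the first visit to `{x, y}` after time `0`. -/
noncomputable def hitBeforeReturnProb (x y : V) : ℝ :=
  ∑' t : ℕ, ∑ ω : Fin (t + 1) → M,
    if (∀ s : Fin (t + 1), 1 ≤ (s : ℕ) → (s : ℕ) ≤ t →
          ((List.ofFn ω).take s).foldl step x ≠ x ∧ ((List.ofFn ω).take s).foldl step x ≠ y) ∧
        (List.ofFn ω).foldl step x = y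
      then ((Fintype.card M : ℝ)⁻¹) ^ (t + 1) else 0

lemma hitBeforeReturnProb_eq_average (x y : V) :
    hitBeforeReturnProb step x y =
      (Fintype.card M : ℝ)⁻¹ * ∑ m, hitProb step x y (step x m) := by
  rw [← tsum_inv_card_mul_sum_wordProb]
  refine tsum_congr fun t => (wordProb_succ t fun l =>
    (∀ s : Fin (t + 1), 1 ≤ (s : ℕ) → (s : ℕ) ≤ t →
      (l.take s).foldl step x ≠ x ∧ (l.take s).foldl step x ≠ y) ∧ l.foldl step x = y).trans ?_
  simp only [wordProb, firstHits_step_ofFn_iff]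

theorem stmt0_general [Finite V] (hsymm : ∀ u v, stepCount step u v = stepCount step v u)
    (hxy : x ≠ y) (hreach : ∃ l : List M, l.foldl step x = y) :
    1 / (Fintype.card M * stepDist step x y : ℝ) ≤ hitBeforeReturnProb step x y := by
  have := Fintype.ofFinite V
  obtain ⟨l, hlen, hl⟩ := exists_length_eq_stepDist hreach
  have hl0 : l ≠ [] := by
    rintro rfl
    exact hxy hl
  have : Nonempty M := ⟨l.head hl0⟩
  have hhead : (l.take 0).foldl step x = x := rfl
  have hlast : (l.take l.length).foldl step x = y := by rw [List.take_length, hl]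
  have hcurrent := one_le_length_mul_sum_of_harmonic (c := fun u v => (stepCount step u v : ℝ))
    (h := hitProb step x y) (fun u v => congrArg _ (hsymm u v)) (fun u v => Nat.cast_nonneg _)
    (injOn_foldl_take_of_length_eq_stepDist hlen hl)
    (fun i hi => Nat.one_le_cast.2 (one_le_stepCount_foldl_take step x l hi))
    (by rw [hhead, hitProb_of_mem step (Or.inl rfl), if_neg hxy])
    (by rw [hlast, hitProb_of_mem step (Or.inr rfl), if_pos rfl])
    (by rw [hhead, hlast]; exact fun z => networkLaplacian_hitProb step)
  rw [hhead, ← sum_step_eq_sum_stepCount_mul, hlen] at hcurrent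
  have hL : (0 : ℝ) < stepDist step x y := by
    rw [← hlen, Nat.cast_pos]
    exact List.length_pos_iff.2 hl0
  rw [hitBeforeReturnProb_eq_average, one_div, mul_inv]
  gcongr
  exact (inv_le_iff_one_le_mul₀' hL).2 hcurrent

end Walk

section Torus

variable {d n : ℕ}

lemma torusMove_eq_add_single (x : Fin d → ZMod n) (m : Fin d × Bool) :
    torusMove d n x m = x + Pi.single m.1 (if m.2 then 1 else -1) := by
  ext i
  rcases eq_or_ne i m.1 with rfl | hi
  · simp [torusMove]
  · simp [torusMove, hi]

lemma torusMove_torusMove_not (x : Fin d → ZMod n) (m : Fin d × Bool) :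
    torusMove d n (torusMove d n x m) (m.1, !m.2) = x := by
  rcases m with ⟨i, b⟩
  cases b <;> simp [torusMove]

lemma stepCount_torusMove_comm (u v : Fin d → ZMod n) :
    stepCount (torusMove d n) u v = stepCount (torusMove d n) v u := by
  refine card_nbij' (fun m => (m.1, !m.2)) (fun m => (m.1, !m.2)) ?_ ?_ ?_ ?_
  · intro m hm
    obtain rfl : torusMove d n u m = v := by simpa using hm
    simp [torusMove_torusMove_not]
  · intro m hm
    obtain rfl : torusMove d n v m = u := by simpa using hm
    simp [torusMove_torusMove_not]
  · simp [Set.LeftInvOn]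
  · simp [Set.LeftInvOn]

/-- The displacements realised by words, from every starting point. -/
def reachableDisplacements (d n : ℕ) : AddSubmonoid (Fin d → ZMod n) where
  carrier := {z | ∀ x, ∃ l, posAfter d n x l = x + z}
  zero_mem' x := ⟨[], (add_zero x).symm⟩
  add_mem' {z w} hz hw x := by
    obtain ⟨l, hl⟩ := hz x
    obtain ⟨k, hk⟩ := hw (x + z)
    refine ⟨l ++ k, ?_⟩
    rw [← add_assoc, ← hk, ← hl]
    exact List.foldl_append

lemma single_one_mem_reachableDisplacements (i : Fin d) :
    Pi.single i 1 ∈ reachableDisplacements d n :=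
  fun x => ⟨[(i, true)], torusMove_eq_add_single x (i, true)⟩

lemma exists_posAfter_eq [NeZero n] (x y : Fin d → ZMod n) : ∃ l, posAfter d n x l = y := by
  have hsum : y - x = ∑ i, ((y - x) i).val • (Pi.single i 1 : Fin d → ZMod n) := by
    simp only [← Pi.single_smul', nsmul_one, ZMod.natCast_zmod_val, univ_sum_single]
  have hmem : y - x ∈ reachableDisplacements d n := by
    rw [hsum]
    exact sum_mem fun i _ => nsmul_mem (single_one_mem_reachableDisplacements i) _
  simpa only [add_sub_cancel] using hmem x

end Torus

/-- For distinct `x, y` on the torus `(ℤ/nℤ)^d`, the probability that the simple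
symmetric random walk started at `x` hits `y` strictly before returning to `x`
is at least `1/(2d · dist(x,y))`.  The probability is written as the sum over the
first time `t+1` at which the walk visits `{x,y}`, of the probability that this
first visit is at `y`. -/
theorem stmt0 (d n : ℕ) (hd : 1 ≤ d) (hn : 1 ≤ n) (x y : Fin d → ZMod n) (hxy : x ≠ y) :
    (1 : ℝ) / (2 * d * tdist d n x y) ≤
      ∑' t : ℕ, ∑ ω : Fin (t + 1) → Fin d × Bool,
        (if (∀ s : Fin (t + 1), 1 ≤ (s : ℕ) → (s : ℕ) ≤ t →
              posAfter d n x ((List.ofFn ω).take s) ≠ x ∧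
              posAfter d n x ((List.ofFn ω).take s) ≠ y)
            ∧ posAfter d n x (List.ofFn ω) = y
          then ((1 : ℝ) / (2 * d)) ^ (t + 1) else 0) := by
  have : NeZero n := NeZero.of_pos hn
  have hcard : (Fintype.card (Fin d × Bool) : ℝ) = 2 * d := by simp [mul_comm]
  have hbound :=
    stmt0_general (torusMove d n) stepCount_torusMove_comm hxy (exists_posAfter_eq x y)
  simp only [hitBeforeReturnProb, hcard, ← one_div] at hbound
  exact hbound
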